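/- Sub-Gamma concentration of the empirical score: let x₁,…,xₙ be i.i.d. with density f_r, let |ε| ≤ r/2, set v = max(E_{x~f_r}[s_r(x+ε)²], I_r), and let Sₙ = (1/n)·Σ_{i=1}^n s_r(x_i+ε). Then for every δ ∈ (0,1), with probability at least 1 − 2δ, |Sₙ − E_{x~f_r}[s_r(x+ε)]| ≤ √(2·v·log(1/δ)/n) + 15·log(1/δ)/(n·r). -/

import Mathlib

/-!
Write `F = f_r` and `S = s_r`. The score is that of a Gaussian convolution, so
`log F + x² / (2r²)` is convex; its supporting line at `x` reads
`F y ≥ F x * exp (S x * (y - x) - (y - x)² / (2r²))` (`tiltedSubgradient_score`, an instance of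
Jensen's inequality). Everything about the score is deduced from this inequality alone.

A large score at `x + ε` forces the density to be exponentially larger at a fixed distance `2r`
from `x`, at a point where the score is still large. If `u = S (x + ε) > 0` and `S x ≥ -u`, then
`F` grows from `x` to `x + 2r`; otherwise `S x < -u` and `F` grows from `x` to `x - 2r`. The case
`u < 0` follows by reflection. The exponential gain absorbs every power of `u`, which gives the
pointwise bound `third_moment`:
`r |S (x + ε)|³ exp (r |S (x + ε)| / 15) F x ≤ 20 S (x + ε)² F x + 2 Σ_± S (x ± 2r)² F (x ± 2r)`.
By translation invariance of Lebesgue measure the integral of the right-hand side is at most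
`(20 + 4) v`, with `v` the maximum of the shifted second moment and the Fisher information. The
same inequality shows that all the integrals involved converge; in particular the Fisher
information is automatically finite.

Taylor's formula `exp y ≤ 1 + y + y² / 2 + |y|³ exp |y| / 6` then yields
`E exp (t X) ≤ exp (t E X + v t² / 2 * (1 + 15 |t| / r))` for `X = S (x + ε)` and `|t| ≤ r / 15`
(`mgf_le`), and Chernoff bounds with a suitable `t` give Bernstein's inequality
(`bernstein_two_sided`).
-/

open MeasureTheory Real

noncomputable section

/-- The Gaussian density with mean 0 and variance `r ^ 2`. -/
def gaussPdf (r x : ℝ) : ℝ :=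
  Real.exp (-(x ^ 2) / (2 * r ^ 2)) / Real.sqrt (2 * Real.pi * r ^ 2)

/-- The `r`-smoothed density `f_r`, i.e. the density of `Y + Z` where `Y ~ f` and
`Z ~ N(0, r²)` independent. -/
def smoothed (f : ℝ → ℝ) (r x : ℝ) : ℝ := ∫ y, f y * gaussPdf r (x - y)

/-- The score function `s_r = f_r' / f_r` of the smoothed density. -/
def score (f : ℝ → ℝ) (r x : ℝ) : ℝ :=
  deriv (fun t => smoothed f r t) x / smoothed f r x

/-- The Fisher information `I_r = E_{x ~ f_r}[s_r(x)²]` of the smoothed density. -/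
def fisherInfo (f : ℝ → ℝ) (r : ℝ) : ℝ := ∫ x, score f r x ^ 2 * smoothed f r x

/-- `f` is a probability density on `ℝ`. -/
def IsDensity (f : ℝ → ℝ) : Prop :=
  (∀ x, 0 ≤ f x) ∧ MeasureTheory.Integrable f ∧ (∫ x, f x) = 1


/-! ### Taylor bound for the exponential -/

lemma exp_le_taylor_two_nonneg {y : ℝ} (hy : 0 ≤ y) :
    exp y ≤ 1 + y + y ^ 2 / 2 + y ^ 3 / 6 * exp y := by
  -- After multiplication by `exp (-y)`, the claim compares the values at `0` and `y` of a function
  -- that increases on `[0, ∞)`.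
  have hder : ∀ t : ℝ, HasDerivAt (fun t : ℝ => exp (-t) * (1 + t + t ^ 2 / 2) + t ^ 3 / 6)
      (t ^ 2 / 2 * (1 - exp (-t))) t := by
    intro t
    have h1 : HasDerivAt (fun t : ℝ => exp (-t)) (exp (-t) * (-1)) t :=
      (hasDerivAt_neg t).exp
    have h2 : HasDerivAt (fun t : ℝ => 1 + t + t ^ 2 / 2) (1 + t) t := by
      have := ((hasDerivAt_id' t).const_add 1).add (((hasDerivAt_id' t).pow 2).div_const 2)
      refine this.congr_deriv ?_
      norm_num
    have h3 : HasDerivAt (fun t : ℝ => t ^ 3 / 6) (t ^ 2 / 2) t := by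
      have := ((hasDerivAt_id' t).pow 3).div_const 6
      refine this.congr_deriv ?_
      norm_num
      ring
    refine ((h1.mul h2).add h3).congr_deriv ?_
    ring
  have hmono : MonotoneOn (fun t : ℝ => exp (-t) * (1 + t + t ^ 2 / 2) + t ^ 3 / 6)
      (Set.Ici 0) := by
    refine monotoneOn_of_deriv_nonneg (convex_Ici 0)
      (fun t _ => (hder t).continuousAt.continuousWithinAt)
      (fun t _ => (hder t).differentiableAt.differentiableWithinAt) fun t ht => ?_
    rw [interior_Ici] at ht
    rw [(hder t).deriv]
    have : exp (-t) ≤ 1 := exp_le_one_iff.2 (by linarith [Set.mem_Ioi.1 ht])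
    exact mul_nonneg (by positivity) (by linarith)
  have h := hmono (Set.mem_Ici.2 le_rfl) (Set.mem_Ici.2 hy) hy
  simp only [neg_zero, exp_zero] at h
  have hprod : exp y * exp (-y) = 1 := by rw [← exp_add]; simp
  nlinarith [exp_pos y, mul_le_mul_of_nonneg_left h (exp_pos y).le]

lemma exp_le_taylor_two (y : ℝ) :
    exp y ≤ 1 + y + y ^ 2 / 2 + |y| ^ 3 / 6 * exp |y| := by
  rcases le_total 0 y with hy | hy
  · rw [abs_of_nonneg hy]
    exact exp_le_taylor_two_nonneg hy
  · have h := Complex.norm_exp_sub_sum_le_exp_norm_sub_sum (y : ℂ) 3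
    have h2 := exp_le_taylor_two_nonneg (abs_nonneg y)
    have e : Complex.exp y - ∑ m ∈ Finset.range 3, (y : ℂ) ^ m / m.factorial
        = ((exp y - (1 + y + y ^ 2 / 2) : ℝ) : ℂ) := by
      simp [Finset.sum_range_succ, Nat.factorial]
    rw [e, Complex.norm_real, Complex.norm_real, Real.norm_eq_abs, Real.norm_eq_abs] at h
    simp [Finset.sum_range_succ, Nat.factorial] at h
    have h3 := (le_abs_self _).trans h
    have : |y| ^ 2 = y ^ 2 := sq_abs y
    simp only [sq_abs] at h2
    linarith

/-! ### Tilted subgradients -/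

/-- `S x + x / r²` is a subgradient at `x` of `log F + x² / (2r²)` for every `x`, written without
logarithms. -/
def TiltedSubgradient (r : ℝ) (F S : ℝ → ℝ) : Prop :=
  ∀ x y, F x * exp (S x * (y - x) - (y - x) ^ 2 / (2 * r ^ 2)) ≤ F y

namespace TiltedSubgradient

lemma reflect {r : ℝ} {F S : ℝ → ℝ} (h : TiltedSubgradient r F S) :
    TiltedSubgradient r (fun x => F (-x)) (fun x => -S (-x)) := by
  intro x y
  convert h (-x) (-y) using 3
  ring

lemma rescale {r : ℝ} (hr : 0 < r) {F S : ℝ → ℝ} (h : TiltedSubgradient r F S) :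
    TiltedSubgradient 1 (fun x => F (r * x)) (fun x => r * S (r * x)) := by
  intro x y
  convert h (r * x) (r * y) using 3
  field_simp

/-- Monotonicity of `x ↦ S x + x`, the subgradient of the convex function `log F + x² / 2`. -/
lemma semi_antitone {F S : ℝ → ℝ} (hF : ∀ x, 0 < F x) (h : TiltedSubgradient 1 F S)
    {x y : ℝ} (hxy : x ≤ y) : S x - (y - x) ≤ S y := by
  rcases hxy.eq_or_lt with rfl | hlt
  · simp
  have h1 := h x y
  have h2 := h y x
  have h3 : F x * (exp (S x * (y - x) - (y - x) ^ 2 / (2 * 1 ^ 2)) *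
      exp (S y * (x - y) - (x - y) ^ 2 / (2 * 1 ^ 2))) ≤ F x * 1 := by
    rw [← mul_assoc, mul_one]
    exact (mul_le_mul_of_nonneg_right h1 (exp_pos _).le).trans h2
  have h4 := le_of_mul_le_mul_left h3 (hF x)
  rw [← exp_add, exp_le_one_iff] at h4
  have : (S x - (y - x)) * (y - x) ≤ S y * (y - x) := by nlinarith
  exact le_of_mul_le_mul_right this (by linarith)

/-- Supporting lines at `x`, evaluated at `x ± 2`: all exponential moments of `S` up to order `2`
are controlled by the mass of `F`. -/
lemma exp_abs_mul_le {F S : ℝ → ℝ} (hF : ∀ x, 0 < F x) (h : TiltedSubgradient 1 F S) (x : ℝ) :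
    F x * exp (2 * |S x| - 2) ≤ F (x + 2) + F (x - 2) := by
  rcases le_total 0 (S x) with h0 | h0
  · have h1 := h x (x + 2)
    have e : S x * (x + 2 - x) - (x + 2 - x) ^ 2 / (2 * 1 ^ 2) = 2 * |S x| - 2 := by
      rw [abs_of_nonneg h0]; ring
    rw [e] at h1
    linarith [hF (x - 2)]
  · have h1 := h x (x - 2)
    have e : S x * (x - 2 - x) - (x - 2 - x) ^ 2 / (2 * 1 ^ 2) = 2 * |S x| - 2 := by
      rw [abs_of_nonpos h0]; ring
    rw [e] at h1
    linarith [hF (x + 2)]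

/-- A large positive score at `x + ε` makes `F` at least `exp (u - 2)` times larger at `x + 2` or at
`x - 2`, where the score still has absolute value at least `u / 2`. -/
lemma tail_pos {F S : ℝ → ℝ} (hF : ∀ x, 0 < F x) (h : TiltedSubgradient 1 F S)
    {ε : ℝ} (hε : |ε| ≤ 1 / 2) (x : ℝ) (hu : 10 ≤ S (x + ε)) :
    F x * exp (S (x + ε) - 2) * (S (x + ε) / 2) ^ 2 ≤
      F (x + 2) * S (x + 2) ^ 2 + F (x - 2) * S (x - 2) ^ 2 := by
  set u := S (x + ε) with hudef
  obtain ⟨hε1, hε2⟩ := abs_le.1 hε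
  have key : ∀ d, F x * exp (u - 2) ≤ F (x + d) → (u / 2) ^ 2 ≤ S (x + d) ^ 2 →
      F x * exp (u - 2) * (u / 2) ^ 2 ≤ F (x + d) * S (x + d) ^ 2 := fun d h1 h2 =>
    mul_le_mul h1 h2 (sq_nonneg _) (hF _).le
  have hp := mul_nonneg (hF (x + 2)).le (sq_nonneg (S (x + 2)))
  have hm := mul_nonneg (hF (x - 2)).le (sq_nonneg (S (x - 2)))
  rcases le_total (-u) (S x) with hw | hw
  · have hk := key 2 ?_ ?_
    · linarith
    · rcases le_total 0 ε with h0 | h0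
      -- For `ε ≥ 0` the bound at `x + 2` is obtained through `x + ε`; for `ε ≤ 0` it is obtained
      -- directly, since then `S x ≥ u - |ε|`.
      · have h1 : F x * exp (u - 2) ≤
            F x * exp (S x * (x + ε - x) - (x + ε - x) ^ 2 / (2 * 1 ^ 2)) *
              exp (u * (x + 2 - (x + ε)) - (x + 2 - (x + ε)) ^ 2 / (2 * 1 ^ 2)) := by
          rw [mul_assoc, ← exp_add]
          refine mul_le_mul_of_nonneg_left (exp_le_exp.2 ?_) (hF x).le
          nlinarith [mul_nonneg h0 (by linarith : 0 ≤ S x + u)]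
        exact h1.trans ((mul_le_mul_of_nonneg_right (h x (x + ε)) (exp_pos _).le).trans
          (h (x + ε) (x + 2)))
      · have hx := semi_antitone hF h (by linarith : x + ε ≤ x)
        refine le_trans (mul_le_mul_of_nonneg_left (exp_le_exp.2 ?_) (hF x).le) (h x (x + 2))
        nlinarith
    · have := semi_antitone hF h (by linarith : x + ε ≤ x + 2)
      exact pow_le_pow_left₀ (by linarith) (by linarith) 2
  · have hk := key (-2) ?_ ?_
    · rw [← sub_eq_add_neg] at hk
      linarith
    · refine le_trans (mul_le_mul_of_nonneg_left (exp_le_exp.2 ?_) (hF x).le) (h x (x + -2))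
      nlinarith
    · have := semi_antitone hF h (by linarith : x + -2 ≤ x)
      nlinarith

lemma tail {F S : ℝ → ℝ} (hF : ∀ x, 0 < F x) (h : TiltedSubgradient 1 F S)
    {ε : ℝ} (hε : |ε| ≤ 1 / 2) (x : ℝ) (hu : 10 ≤ |S (x + ε)|) :
    F x * exp (|S (x + ε)| - 2) * (|S (x + ε)| / 2) ^ 2 ≤
      F (x + 2) * S (x + 2) ^ 2 + F (x - 2) * S (x - 2) ^ 2 := by
  rcases le_total 0 (S (x + ε)) with h0 | h0
  · rw [abs_of_nonneg h0] at hu ⊢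
    exact tail_pos hF h hε x hu
  · rw [abs_of_nonpos h0] at hu ⊢
    have e : -(-x + -ε) = x + ε := by ring
    have := tail_pos (fun x => hF (-x)) h.reflect (ε := -ε) (by rwa [abs_neg]) (-x)
      (by rw [e]; exact hu)
    simp only [e, neg_neg, neg_sq] at this
    rw [show -(-x + 2) = x - 2 by ring, show -(-x - 2) = x + 2 by ring] at this
    linarith

lemma cube_mul_exp_le {u : ℝ} (hu : 10 ≤ u) :
    u ^ 3 * exp (u / 15) ≤ 2 * (exp (u - 2) * (u / 2) ^ 2) := by
  have h1 : u ≤ 10 * exp (u / 10 - 1) := by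
    have := add_one_le_exp (u / 10 - 1)
    linarith
  have h7 : (20 : ℝ) ≤ exp 7 := by
    have h2 : (2 : ℝ) ≤ exp 1 := by linarith [add_one_le_exp (1 : ℝ)]
    have h3 : exp 7 = exp 1 ^ 7 := by rw [← exp_nat_mul]; norm_num
    rw [h3]
    exact le_trans (by norm_num) (pow_le_pow_left₀ (by norm_num) h2 7)
  have h2 : u * exp (u / 15) ≤ 1 / 2 * exp (u - 2) := by
    calc u * exp (u / 15) ≤ 10 * exp (u / 10 - 1) * exp (u / 15) :=
          mul_le_mul_of_nonneg_right h1 (exp_pos _).le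
      _ ≤ 1 / 2 * exp 7 * exp (u / 10 - 1) * exp (u / 15) := by gcongr; linarith
      _ = 1 / 2 * exp (7 + (u / 10 - 1) + u / 15) := by rw [exp_add, exp_add]; ring
      _ ≤ _ := by gcongr; linarith
  nlinarith [mul_le_mul_of_nonneg_left h2 (sq_nonneg u)]

lemma third_moment_unit {F S : ℝ → ℝ} (hF : ∀ x, 0 < F x) (h : TiltedSubgradient 1 F S)
    {ε : ℝ} (hε : |ε| ≤ 1 / 2) (x : ℝ) :
    |S (x + ε)| ^ 3 * exp (|S (x + ε)| / 15) * F x ≤ 20 * (S (x + ε) ^ 2 * F x) +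
      2 * (S (x + 2) ^ 2 * F (x + 2) + S (x - 2) ^ 2 * F (x - 2)) := by
  have hp := mul_nonneg (sq_nonneg (S (x + 2))) (hF (x + 2)).le
  have hm := mul_nonneg (sq_nonneg (S (x - 2))) (hF (x - 2)).le
  rcases le_total 10 |S (x + ε)| with hu | hu
  · have h1 := mul_le_mul_of_nonneg_right (cube_mul_exp_le hu) (hF x).le
    have h2 := tail hF h hε x hu
    have h3 := mul_nonneg (sq_nonneg (S (x + ε))) (hF x).le
    linarith
  · have h2 : exp (|S (x + ε)| / 15) ≤ 2 := by
      have h4 : exp (|S (x + ε)| / 15) ^ 3 ≤ 2 ^ 3 := by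
        rw [← exp_nat_mul]
        have h5 : exp ((3 : ℕ) * (|S (x + ε)| / 15)) ≤ exp (2 : ℕ) :=
          exp_le_exp.2 (by push_cast; linarith)
        have h6 : exp (2 : ℕ) = exp 1 ^ 2 := by rw [← exp_nat_mul]; simp
        have h7 : exp 1 ^ 2 ≤ (2 : ℝ) ^ 3 := by nlinarith [exp_one_lt_d9, exp_pos (1 : ℝ)]
        exact h5.trans (h6.trans_le h7)
      exact le_of_pow_le_pow_left₀ (by norm_num) (by norm_num) h4
    have h7 : |S (x + ε)| * exp (|S (x + ε)| / 15) ≤ 10 * 2 :=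
      mul_le_mul hu h2 (exp_pos _).le (by norm_num)
    have h8 := mul_le_mul_of_nonneg_right h7 (mul_nonneg (sq_nonneg |S (x + ε)|) (hF x).le)
    rw [sq_abs] at h8
    have : |S (x + ε)| ^ 3 = |S (x + ε)| * S (x + ε) ^ 2 := by rw [← sq_abs]; ring
    rw [this]
    linarith

/-- Pointwise control of the exponentially weighted third moment by second moments. The factor `20`
comes from the region `r |S (x + ε)| ≤ 10`, where `10 * exp (10 / 15) ≤ 20`. -/
lemma third_moment {r : ℝ} (hr : 0 < r) {F S : ℝ → ℝ} (hF : ∀ x, 0 < F x)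
    (h : TiltedSubgradient r F S) {ε : ℝ} (hε : |ε| ≤ r / 2) (x : ℝ) :
    r * (|S (x + ε)| ^ 3 * exp (r / 15 * |S (x + ε)|) * F x) ≤ 20 * (S (x + ε) ^ 2 * F x) +
      2 * (S (x + 2 * r) ^ 2 * F (x + 2 * r) + S (x - 2 * r) ^ 2 * F (x - 2 * r)) := by
  have hε' : |ε / r| ≤ 1 / 2 := by
    rw [abs_div, abs_of_pos hr, div_le_iff₀ hr]
    linarith
  have := third_moment_unit (fun x => hF (r * x)) (h.rescale hr) hε' (x / r)
  have e0 : r * (x / r) = x := by field_simp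
  have e1 : r * (x / r + ε / r) = x + ε := by field_simp
  have e2 : r * (x / r + 2) = x + 2 * r := by field_simp
  have e3 : r * (x / r - 2) = x - 2 * r := by field_simp
  simp only [e0, e1, e2, e3, abs_mul, abs_of_pos hr] at this
  rw [show r * |S (x + ε)| / 15 = r / 15 * |S (x + ε)| by ring] at this
  refine le_of_mul_le_mul_left ?_ (pow_pos hr 2)
  linarith

lemma exp_abs_mul_le' {r : ℝ} (hr : 0 < r) {F S : ℝ → ℝ} (hF : ∀ x, 0 < F x)
    (h : TiltedSubgradient r F S) (x : ℝ) :
    exp (2 * (r * |S x|) - 2) * F x ≤ F (x + 2 * r) + F (x - 2 * r) := by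
  have := exp_abs_mul_le (fun x => hF (r * x)) (h.rescale hr) (x / r)
  have e0 : r * (x / r) = x := by field_simp
  have e2 : r * (x / r + 2) = x + 2 * r := by field_simp
  have e3 : r * (x / r - 2) = x - 2 * r := by field_simp
  simp only [e0, e2, e3, abs_mul, abs_of_pos hr] at this
  linarith

end TiltedSubgradient

/-! ### Bernstein's inequality -/

/-- The Chernoff exponent. A suitable choice is `t = a / (1 + c a)` with `a = √(2l / (N v))`, and
`t = 1 / c` in the degenerate case `v = 0`. -/
lemma bernstein_optimize {v c l N : ℝ} (hv : 0 ≤ v) (hc : 0 < c) (hl : 0 < l) (hN : 0 < N) :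
    ∃ t, 0 ≤ t ∧ t ≤ 1 / c ∧
      N * (v * t ^ 2 / 2 * (1 + c * t) - t * (√(2 * v * l / N) + c * l / N)) ≤ -l := by
  rcases hv.eq_or_lt with rfl | hv
  · refine ⟨1 / c, by positivity, le_rfl, ?_⟩
    simp only [mul_zero, zero_mul, zero_div, sqrt_zero, zero_add, zero_sub]
    field_simp
    rfl
  · set a := √(2 * l / (N * v)) with ha
    have ha0 : 0 < a := by positivity
    have hl' : l = N * v * a ^ 2 / 2 := by
      rw [ha, sq_sqrt (by positivity)]
      field_simp
    have hs : √(2 * v * l / N) = v * a := by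
      rw [hl', sqrt_eq_iff_mul_self_eq (by positivity) (by positivity)]
      field_simp
    have hca : 0 < 1 + c * a := by positivity
    refine ⟨a / (1 + c * a), by positivity, ?_, ?_⟩
    · rw [div_le_div_iff₀ hca hc]
      linarith
    · rw [hs, hl']
      have h1 : 1 + c * (a / (1 + c * a)) ≤ 1 + c * a := by
        have : a / (1 + c * a) ≤ a := div_le_self ha0.le (by nlinarith)
        nlinarith
      have h2 : v * (a / (1 + c * a)) ^ 2 / 2 * (1 + c * (a / (1 + c * a))) ≤
          v * (a / (1 + c * a)) ^ 2 / 2 * (1 + c * a) :=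
        mul_le_mul_of_nonneg_left h1 (by positivity)
      have h3 : N * (v * (a / (1 + c * a)) ^ 2 / 2 * (1 + c * a) - a / (1 + c * a) *
          (v * a + c * (N * v * a ^ 2 / 2) / N)) = -(N * v * a ^ 2 / 2) := by
        field_simp
        ring
      rw [← h3]
      gcongr

lemma bernstein_one_sided {μ : Measure ℝ} [IsProbabilityMeasure μ] {X : ℝ → ℝ}
    {m v c δ : ℝ} {n : ℕ} (hn : 0 < n) (hv : 0 ≤ v) (hc : 0 < c) (hδ0 : 0 < δ) (hδ1 : δ < 1)
    (hint : ∀ t, 0 ≤ t → t ≤ 1 / c → Integrable (fun x => exp (t * X x)) μ)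
    (hmgf : ∀ t, 0 ≤ t → t ≤ 1 / c →
      ∫ x, exp (t * X x) ∂μ ≤ exp (t * m + v * t ^ 2 / 2 * (1 + c * t))) :
    (Measure.pi fun _ : Fin n => μ).real {x | n * (m + (√(2 * v * log (1 / δ) / n) +
      c * log (1 / δ) / n)) ≤ ∑ i, X (x i)} ≤ δ := by
  have hN : (0 : ℝ) < n := by exact_mod_cast hn
  have hl : 0 < log (1 / δ) := log_pos (by rw [lt_div_iff₀ hδ0]; linarith)
  obtain ⟨t, ht0, ht1, ht⟩ := bernstein_optimize hv hc hl hN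
  set T := √(2 * v * log (1 / δ) / n) + c * log (1 / δ) / n
  have hexp : ∀ x : Fin n → ℝ, exp (t * ∑ i, X (x i)) = ∏ i, exp (t * X (x i)) := fun x => by
    rw [Finset.mul_sum, exp_sum]
  have hI : Integrable (fun x : Fin n → ℝ => exp (t * ∑ i, X (x i)))
      (Measure.pi fun _ : Fin n => μ) := by
    simp_rw [hexp]
    exact Integrable.fintype_prod (f := fun _ x => exp (t * X x)) fun _ => hint t ht0 ht1
  refine (ProbabilityTheory.measure_ge_le_exp_mul_mgf _ ht0 hI).trans ?_
  have hM : ProbabilityTheory.mgf (fun x : Fin n → ℝ => ∑ i, X (x i))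
      (Measure.pi fun _ : Fin n => μ) t = (∫ x, exp (t * X x) ∂μ) ^ n := by
    rw [ProbabilityTheory.mgf]
    simp_rw [hexp]
    rw [integral_fintype_prod_eq_pow (fun x => exp (t * X x)), Fintype.card_fin]
  rw [hM]
  calc exp (-t * (n * (m + T))) * (∫ x, exp (t * X x) ∂μ) ^ n
      ≤ exp (-t * (n * (m + T))) * exp (t * m + v * t ^ 2 / 2 * (1 + c * t)) ^ n := by
        gcongr
        exact hmgf t ht0 ht1
    _ = exp (n * (v * t ^ 2 / 2 * (1 + c * t) - t * T)) := by
        rw [← exp_nat_mul, ← exp_add]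
        congr 1
        ring
    _ ≤ exp (-log (1 / δ)) := exp_le_exp.2 ht
    _ = δ := by rw [← log_inv, exp_log (by positivity)]; simp

lemma bernstein_two_sided {μ : Measure ℝ} [IsProbabilityMeasure μ] {X : ℝ → ℝ}
    {m v c δ : ℝ} {n : ℕ} (hn : 0 < n) (hv : 0 ≤ v) (hc : 0 < c) (hδ0 : 0 < δ) (hδ1 : δ < 1)
    (hint : ∀ t, |t| ≤ 1 / c → Integrable (fun x => exp (t * X x)) μ)
    (hmgf : ∀ t, |t| ≤ 1 / c →
      ∫ x, exp (t * X x) ∂μ ≤ exp (t * m + v * t ^ 2 / 2 * (1 + c * |t|))) :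
    ENNReal.ofReal (1 - 2 * δ) ≤ (Measure.pi fun _ : Fin n => μ)
      {x | |(1 / n : ℝ) * ∑ i, X (x i) - m| ≤
        √(2 * v * log (1 / δ) / n) + c * log (1 / δ) / n} := by
  have hN : (0 : ℝ) < n := by exact_mod_cast hn
  have h1 := bernstein_one_sided (m := m) (X := X) hn hv hc hδ0 hδ1
    (fun t h0 ht => hint t (by rwa [abs_of_nonneg h0]))
    (fun t h0 ht => by simpa only [abs_of_nonneg h0] using hmgf t (by rwa [abs_of_nonneg h0]))
  have h2 := bernstein_one_sided (m := -m) (X := fun x => -X x) hn hv hc hδ0 hδ1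
    (fun t h0 ht => by
      simpa only [neg_mul, mul_neg] using hint (-t) (by rwa [abs_neg, abs_of_nonneg h0]))
    (fun t h0 ht => by
      simpa only [neg_mul, mul_neg, abs_neg, abs_of_nonneg h0, neg_sq] using
        hmgf (-t) (by rwa [abs_neg, abs_of_nonneg h0]))
  set T := √(2 * v * log (1 / δ) / n) + c * log (1 / δ) / n
  set P := Measure.pi fun _ : Fin n => μ
  set A := {x : Fin n → ℝ | n * (m + T) ≤ ∑ i, X (x i)}
  set B := {x : Fin n → ℝ | n * (-m + T) ≤ ∑ i, -X (x i)}
  set G := {x : Fin n → ℝ | |(1 / n : ℝ) * ∑ i, X (x i) - m| ≤ T}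
  have hcov : (Set.univ : Set (Fin n → ℝ)) ⊆ G ∪ (A ∪ B) := by
    intro x _
    by_contra hx
    simp only [Set.mem_union, not_or] at hx
    obtain ⟨hG, hA, hB⟩ := hx
    simp only [A, B, Set.mem_ofPred_eq, not_le, Finset.sum_neg_distrib] at hA hB
    refine hG (show |(1 / n : ℝ) * ∑ i, X (x i) - m| ≤ T from abs_le.2 ⟨?_, ?_⟩)
    · have : m - T ≤ (1 / n : ℝ) * ∑ i, X (x i) := by
        rw [one_div, inv_mul_eq_div, le_div_iff₀ hN]
        linarith
      linarith
    · have : (1 / n : ℝ) * ∑ i, X (x i) ≤ m + T := by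
        rw [one_div, inv_mul_eq_div, div_le_iff₀ hN]
        linarith
      linarith
  have h3 : P.real Set.univ ≤ P.real G + (P.real A + P.real B) :=
    (measureReal_mono hcov).trans
      ((measureReal_union_le _ _).trans (by gcongr; exact measureReal_union_le _ _))
  rw [probReal_univ] at h3
  exact ENNReal.ofReal_le_of_le_toReal (show 1 - 2 * δ ≤ P.real G by linarith)

/-! ### The Gaussian kernel and the smoothed density -/

lemma gaussPdf_pos {r : ℝ} (hr : 0 < r) (x : ℝ) : 0 < gaussPdf r x := by
  unfold gaussPdf
  positivity

lemma gaussPdf_continuous (r : ℝ) : Continuous (gaussPdf r) := by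
  unfold gaussPdf
  fun_prop

lemma gaussPdf_le {r : ℝ} (x : ℝ) : gaussPdf r x ≤ 1 / √(2 * π * r ^ 2) := by
  unfold gaussPdf
  gcongr
  rw [exp_le_one_iff, neg_div, neg_nonpos]
  positivity

lemma gaussPdf_hasDerivAt {r : ℝ} (hr : 0 < r) (x : ℝ) :
    HasDerivAt (gaussPdf r) (-x / r ^ 2 * gaussPdf r x) x := by
  have h1 : HasDerivAt (fun x : ℝ => -(x ^ 2) / (2 * r ^ 2)) (-x / r ^ 2) x := by
    refine (((hasDerivAt_id' x).pow 2).neg.div_const (2 * r ^ 2)).congr_deriv ?_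
    field_simp
    norm_num
  refine (h1.exp.div_const (√(2 * π * r ^ 2))).congr_deriv ?_
  unfold gaussPdf
  ring

lemma abs_gaussPdf_deriv_le {r : ℝ} (hr : 0 < r) (x : ℝ) :
    |-x / r ^ 2 * gaussPdf r x| ≤ 1 / r * (1 / √(2 * π * r ^ 2)) := by
  have h1 : |x| / r * exp (-(x ^ 2) / (2 * r ^ 2)) ≤ 1 := by
    have h2 : |x| / r ≤ exp (x ^ 2 / (2 * r ^ 2)) := by
      have h3 := add_one_le_exp (x ^ 2 / (2 * r ^ 2))
      have h4 : x ^ 2 / (2 * r ^ 2) = (|x| / r) ^ 2 / 2 := by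
        rw [div_pow, sq_abs]; field_simp
      nlinarith [sq_nonneg (|x| / r - 1)]
    calc _ ≤ exp (x ^ 2 / (2 * r ^ 2)) * exp (-(x ^ 2) / (2 * r ^ 2)) := by gcongr
      _ = 1 := by rw [← exp_add]; ring_nf; simp
  have h5 : |-x / r ^ 2 * gaussPdf r x| =
      1 / r * ((|x| / r * exp (-(x ^ 2) / (2 * r ^ 2))) / √(2 * π * r ^ 2)) := by
    rw [abs_mul, abs_of_pos (gaussPdf_pos hr x), abs_div, abs_neg, abs_of_pos (pow_pos hr 2)]
    unfold gaussPdf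
    field_simp
  rw [h5]
  gcongr

/-- Exponential tilting of the Gaussian kernel. -/
lemma gaussPdf_shift {r : ℝ} (hr : 0 < r) (x d : ℝ) :
    gaussPdf r (x + d) =
      gaussPdf r x * exp (-x / r ^ 2 * d) * exp (-(d ^ 2) / (2 * r ^ 2)) := by
  unfold gaussPdf
  rw [div_mul_eq_mul_div, div_mul_eq_mul_div, ← exp_add, ← exp_add]
  congr 2
  field_simp
  ring

lemma gaussPdf_eq {r : ℝ} :
    gaussPdf r = ProbabilityTheory.gaussianPDFReal 0 ⟨r ^ 2, sq_nonneg r⟩ := by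
  funext x
  change _ = (√(2 * π * r ^ 2))⁻¹ * exp (-(x - 0) ^ 2 / (2 * r ^ 2))
  rw [sub_zero, gaussPdf, div_eq_inv_mul]

lemma gaussPdf_integrable {r : ℝ} : Integrable (gaussPdf r) := by
  rw [gaussPdf_eq]
  exact ProbabilityTheory.integrable_gaussianPDFReal _ _

lemma gaussPdf_integral {r : ℝ} (hr : 0 < r) : ∫ x, gaussPdf r x = 1 := by
  rw [gaussPdf_eq]
  refine ProbabilityTheory.integral_gaussianPDFReal_eq_one _ fun h => ?_
  have := congrArg NNReal.toReal h
  exact (pow_pos hr 2).ne' this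

section Smoothed

variable {f : ℝ → ℝ} {r : ℝ}

lemma smoothed_integrand_integrable (hf : IsDensity f) (hr : 0 < r) (x : ℝ) :
    Integrable fun y => f y * gaussPdf r (x - y) := by
  refine hf.2.1.mul_bdd (c := 1 / √(2 * π * r ^ 2)) ?_ (.of_forall fun y => ?_)
  · exact ((gaussPdf_continuous r).comp (by fun_prop)).aestronglyMeasurable
  · rw [Real.norm_eq_abs, abs_of_pos (gaussPdf_pos hr _)]
    exact gaussPdf_le _

lemma smoothed_hasDerivAt (hf : IsDensity f) (hr : 0 < r) (x : ℝ) :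
    Integrable (fun y => f y * (-(x - y) / r ^ 2 * gaussPdf r (x - y))) ∧
    HasDerivAt (smoothed f r) (∫ y, f y * (-(x - y) / r ^ 2 * gaussPdf r (x - y))) x := by
  have hg := gaussPdf_continuous r
  refine hasDerivAt_integral_of_dominated_loc_of_deriv_le (s := Set.univ)
    (F := fun x y => f y * gaussPdf r (x - y))
    (F' := fun x y => f y * (-(x - y) / r ^ 2 * gaussPdf r (x - y)))
    (bound := fun y => f y * (1 / r * (1 / √(2 * π * r ^ 2)))) Filter.univ_mem
    (.of_forall fun x => (smoothed_integrand_integrable hf hr x).aestronglyMeasurable)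
    (smoothed_integrand_integrable hf hr x) ?_ (.of_forall fun y x _ => ?_)
    (hf.2.1.mul_const _) (.of_forall fun y x _ => ?_)
  · exact hf.2.1.aestronglyMeasurable.mul
      (Continuous.aestronglyMeasurable (by fun_prop))
  · rw [norm_mul, Real.norm_eq_abs, abs_of_nonneg (hf.1 y)]
    exact mul_le_mul_of_nonneg_left (abs_gaussPdf_deriv_le hr _) (hf.1 y)
  · have := (gaussPdf_hasDerivAt hr (x - y)).comp x ((hasDerivAt_id' x).sub_const y)
    exact (this.congr_deriv (mul_one _)).const_mul (f y)

lemma smoothed_pos (hf : IsDensity f) (hr : 0 < r) (x : ℝ) : 0 < smoothed f r x := by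
  have hsupp : (Function.support fun y => f y * gaussPdf r (x - y)) = Function.support f := by
    ext y
    simp [(gaussPdf_pos hr (x - y)).ne']
  rw [smoothed, integral_pos_iff_support_of_nonneg
    (fun y => mul_nonneg (hf.1 y) (gaussPdf_pos hr _).le) (smoothed_integrand_integrable hf hr x),
    hsupp, ← integral_pos_iff_support_of_nonneg hf.1 hf.2.1, hf.2.2]
  exact one_pos

lemma smoothed_differentiable (hf : IsDensity f) (hr : 0 < r) : Differentiable ℝ (smoothed f r) :=
  fun x => (smoothed_hasDerivAt hf hr x).2.differentiableAt

lemma score_measurable (hf : IsDensity f) (hr : 0 < r) : Measurable (score f r) :=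
  (measurable_deriv _).div (smoothed_differentiable hf hr).continuous.measurable

lemma smoothed_integrable (hf : IsDensity f) : Integrable (smoothed f r) :=
  hf.2.1.integrable_convolution (ContinuousLinearMap.mul ℝ ℝ) gaussPdf_integrable

lemma smoothed_integral (hf : IsDensity f) (hr : 0 < r) : ∫ x, smoothed f r x = 1 := by
  have := integral_convolution (ContinuousLinearMap.mul ℝ ℝ) hf.2.1
    (gaussPdf_integrable (r := r))
  rw [hf.2.2, gaussPdf_integral hr] at this
  exact this.trans (mul_one 1)

/-- The smoothed density at `y` is an integral of `exp (-(x - z) / r² * (y - x))` against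
`f z * gaussPdf r (x - z)`, up to a constant. Since `score f r x` is the corresponding average of
`-(x - z) / r²`, bounding the exponential below by its tangent at the mean exponent gives the
inequality. -/
lemma tiltedSubgradient_score (hf : IsDensity f) (hr : 0 < r) :
    TiltedSubgradient r (smoothed f r) (score f r) := by
  intro x y
  obtain ⟨hI, hD⟩ := smoothed_hasDerivAt hf hr x
  have hI0 := smoothed_integrand_integrable hf hr x
  set m := score f r x * (y - x) with hm
  set K := exp (m - (y - x) ^ 2 / (2 * r ^ 2)) with hK
  have hscore : score f r x * smoothed f r x =
      ∫ z, f z * (-(x - z) / r ^ 2 * gaussPdf r (x - z)) := by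
    rw [← hD.deriv]
    exact div_mul_cancel₀ _ (smoothed_pos hf hr x).ne'
  have hpt : ∀ z, K * ((1 - m) * (f z * gaussPdf r (x - z)) +
      (y - x) * (f z * (-(x - z) / r ^ 2 * gaussPdf r (x - z)))) ≤
        f z * gaussPdf r (y - z) := by
    intro z
    have e : y - z = (x - z) + (y - x) := by ring
    have hs := gaussPdf_shift hr (x - z) (y - x)
    rw [← e] at hs
    have hK' : K = exp m * exp (-(y - x) ^ 2 / (2 * r ^ 2)) := by
      rw [hK, ← exp_add]; congr 1; ring
    have h1 : exp m * (1 - m + -(x - z) / r ^ 2 * (y - x)) ≤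
        exp (-(x - z) / r ^ 2 * (y - x)) := by
      have h2 := add_one_le_exp (-(x - z) / r ^ 2 * (y - x) - m)
      calc _ ≤ exp m * exp (-(x - z) / r ^ 2 * (y - x) - m) := by gcongr; linarith
        _ = _ := by rw [← exp_add]; congr 1; ring
    have h3 : 0 ≤ f z * gaussPdf r (x - z) * exp (-(y - x) ^ 2 / (2 * r ^ 2)) :=
      mul_nonneg (mul_nonneg (hf.1 z) (gaussPdf_pos hr _).le) (exp_pos _).le
    have h4 := mul_le_mul_of_nonneg_left h1 h3
    rw [hs, hK']
    linarith
  have hint := integral_mono (((hI0.const_mul (1 - m)).add (hI.const_mul (y - x))).const_mul K)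
    (smoothed_integrand_integrable hf hr y) hpt
  rw [integral_const_mul, integral_add' (hI0.const_mul _) (hI.const_mul _), integral_const_mul,
    integral_const_mul, ← hscore] at hint
  change K * ((1 - m) * smoothed f r x + (y - x) * (score f r x * smoothed f r x)) ≤
    smoothed f r y at hint
  refine le_trans (le_of_eq ?_) hint
  rw [hm]
  ring

end Smoothed

/-! ### Moment generating function of the shifted score -/

lemma isProbabilityMeasure_smoothed {f : ℝ → ℝ} {r : ℝ} (hf : IsDensity f) (hr : 0 < r) :
    IsProbabilityMeasure
      (volume.withDensity fun t => ENNReal.ofReal (smoothed f r t)) := by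
  refine ⟨?_⟩
  rw [withDensity_apply _ MeasurableSet.univ, setLIntegral_univ, ← ofReal_integral_eq_lintegral_ofReal (smoothed_integrable hf)
    (.of_forall fun x => (smoothed_pos hf hr x).le), smoothed_integral hf hr, ENNReal.ofReal_one]

namespace TiltedSubgradient

variable {r : ℝ} {F S : ℝ → ℝ}

lemma integrable_sq (h : TiltedSubgradient r F S) (hr : 0 < r) (hF : ∀ x, 0 < F x)
    (hFi : Integrable F) (hFm : Measurable F) (hSm : Measurable S) :
    Integrable fun x => S x ^ 2 * F x := by
  have hb : Integrable fun x => 1 / r ^ 2 * (F (x + 2 * r) + F (x - 2 * r)) :=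
    ((hFi.comp_add_right _).add (hFi.comp_sub_right _)).const_mul _
  refine hb.mono' (by fun_prop) (.of_forall fun x => ?_)
  rw [Real.norm_eq_abs, abs_of_nonneg (mul_nonneg (sq_nonneg _) (hF x).le), one_div,
    inv_mul_eq_div, le_div_iff₀ (by positivity)]
  refine le_trans ?_ (h.exp_abs_mul_le' hr hF x)
  have h1 : (r * |S x|) ^ 2 ≤ exp (2 * (r * |S x|) - 2) := by
    have h2 : r * |S x| ≤ exp (r * |S x| - 1) := by
      linarith [add_one_le_exp (r * |S x| - 1)]
    have h3 : exp (2 * (r * |S x|) - 2) = exp (r * |S x| - 1) ^ 2 := by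
      rw [← exp_nat_mul]; congr 1; push_cast; ring
    rw [h3]
    exact pow_le_pow_left₀ (by positivity) h2 2
  have h4 := mul_le_mul_of_nonneg_right h1 (hF x).le
  rw [mul_pow, sq_abs] at h4
  linarith

/-- Sub-Gamma bound on the moment generating function of `S (x + ε)` under the density `F`, together
with the integrability it presupposes. -/
lemma mgf_le (h : TiltedSubgradient r F S) (hr : 0 < r) (hF : ∀ x, 0 < F x)
    (hFi : Integrable F) (hFm : Measurable F) (hSm : Measurable S) (hF1 : ∫ x, F x = 1)
    {ε : ℝ} (hε : |ε| ≤ r / 2) {t : ℝ} (ht : |t| ≤ r / 15) :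
    Integrable (fun x => exp (t * S (x + ε)) * F x) ∧
    ∫ x, exp (t * S (x + ε)) * F x ≤
      exp (t * (∫ x, S (x + ε) * F x) +
        max (∫ x, S (x + ε) ^ 2 * F x) (∫ x, S x ^ 2 * F x) * t ^ 2 / 2 * (1 + 15 / r * |t|)) := by
  have hSεm : Measurable fun x => S (x + ε) := by fun_prop
  have hI := h.integrable_sq hr hF hFi hFm hSm
  have hI' : Integrable fun x => S (x + 2 * r) ^ 2 * F (x + 2 * r) + S (x - 2 * r) ^ 2 *
      F (x - 2 * r) := (hI.comp_add_right (2 * r)).add (hI.comp_sub_right (2 * r))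
  have hQ : ∫ x, (S (x + 2 * r) ^ 2 * F (x + 2 * r) + S (x - 2 * r) ^ 2 * F (x - 2 * r)) =
      2 * ∫ x, S x ^ 2 * F x := by
    rw [integral_add (hI.comp_add_right (2 * r)) (hI.comp_sub_right (2 * r)),
      integral_add_right_eq_self (fun x => S x ^ 2 * F x),
      integral_sub_right_eq_self (fun x => S x ^ 2 * F x)]
    ring
  have h3 := h.third_moment hr hF hε
  have hX2 : Integrable fun x => S (x + ε) ^ 2 * F x := by
    have hb : Integrable fun x => 1600 / r ^ 2 * F x + 1 / 10 * (S (x + 2 * r) ^ 2 *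
        F (x + 2 * r) + S (x - 2 * r) ^ 2 * F (x - 2 * r)) :=
      (hFi.const_mul _).add (hI'.const_mul _)
    refine hb.mono' (by fun_prop) (.of_forall fun x => ?_)
    rw [Real.norm_eq_abs, abs_of_nonneg (mul_nonneg (sq_nonneg _) (hF x).le)]
    have hq := mul_nonneg (sq_nonneg (S (x + 2 * r))) (hF (x + 2 * r)).le
    have hq' := mul_nonneg (sq_nonneg (S (x - 2 * r))) (hF (x - 2 * r)).le
    have hs := mul_nonneg (sq_nonneg (S (x + ε))) (hF x).le
    -- `third_moment` has `S (x + ε) ^ 2` on its right-hand side as well; once `r |S (x + ε)| ≥ 40`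
    -- the left-hand side dominates that term.
    rcases le_total (r * |S (x + ε)|) 40 with hu | hu
    · have h4 : S (x + ε) ^ 2 ≤ 1600 / r ^ 2 := by
        rw [le_div_iff₀ (by positivity), ← sq_abs]
        nlinarith [mul_nonneg hr.le (abs_nonneg (S (x + ε)))]
      have := mul_le_mul_of_nonneg_right h4 (hF x).le
      linarith
    · have h4 : 40 * 1 ≤ r * |S (x + ε)| * exp (r / 15 * |S (x + ε)|) :=
        mul_le_mul hu (one_le_exp (by positivity)) zero_le_one (by positivity)
      have h5 := mul_le_mul_of_nonneg_right h4 hs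
      have h6 : r * |S (x + ε)| * exp (r / 15 * |S (x + ε)|) * (S (x + ε) ^ 2 * F x) =
          r * (|S (x + ε)| ^ 3 * exp (r / 15 * |S (x + ε)|) * F x) := by
        rw [← sq_abs]; ring
      have h7 : 0 ≤ 1600 / r ^ 2 * F x := mul_nonneg (by positivity) (hF x).le
      linarith [h3 x]
  have hX1 : Integrable fun x => S (x + ε) * F x := by
    refine (hFi.add hX2).mono' (by fun_prop) (.of_forall fun x => ?_)
    rw [norm_mul, Real.norm_eq_abs, Real.norm_eq_abs, abs_of_pos (hF x)]
    have : |S (x + ε)| ≤ 1 + S (x + ε) ^ 2 := by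
      rw [← sq_abs]; nlinarith [sq_nonneg (|S (x + ε)| - 1), sq_nonneg |S (x + ε)|]
    have := mul_le_mul_of_nonneg_right this (hF x).le
    simp only [Pi.add_apply]
    linarith
  have hX3 : Integrable fun x => |S (x + ε)| ^ 3 * exp (r / 15 * |S (x + ε)|) * F x := by
    have hb : Integrable fun x => 1 / r * (20 * (S (x + ε) ^ 2 * F x) + 2 * (S (x + 2 * r) ^ 2 *
        F (x + 2 * r) + S (x - 2 * r) ^ 2 * F (x - 2 * r))) :=
      ((hX2.const_mul _).add (hI'.const_mul _)).const_mul _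
    refine hb.mono' ?_ (.of_forall fun x => ?_)
    · have : Measurable fun x => |S (x + ε)| := hSεm.abs
      fun_prop
    · have := (hF x).le
      rw [Real.norm_eq_abs, abs_of_nonneg (by positivity), one_div, inv_mul_eq_div,
        le_div_iff₀ hr]
      linarith [h3 x]
  set v := max (∫ x, S (x + ε) ^ 2 * F x) (∫ x, S x ^ 2 * F x)
  have hv1 : ∫ x, S (x + ε) ^ 2 * F x ≤ v := le_max_left _ _
  have hv2 : ∫ x, S x ^ 2 * F x ≤ v := le_max_right _ _
  have hX3v : ∫ x, |S (x + ε)| ^ 3 * exp (r / 15 * |S (x + ε)|) * F x ≤ 24 * v / r := by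
    have h4 := integral_mono (hX3.const_mul r)
      ((hX2.const_mul 20).add (hI'.const_mul 2)) h3
    rw [integral_const_mul, integral_add' (hX2.const_mul 20) (hI'.const_mul 2),
      integral_const_mul, integral_const_mul, hQ] at h4
    rw [le_div_iff₀ hr]
    linarith
  -- The second-order Taylor bound for `exp (t * X) * F`, integrated term by term below.
  have hpt : ∀ x, exp (t * S (x + ε)) * F x ≤ F x + t * (S (x + ε) * F x) +
      t ^ 2 / 2 * (S (x + ε) ^ 2 * F x) +
      |t| ^ 3 / 6 * (|S (x + ε)| ^ 3 * exp (r / 15 * |S (x + ε)|) * F x) := by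
    intro x
    have h5 : exp |t * S (x + ε)| ≤ exp (r / 15 * |S (x + ε)|) := by
      rw [abs_mul]; gcongr
    have h6 := exp_le_taylor_two (t * S (x + ε))
    have h7 : |t * S (x + ε)| ^ 3 / 6 * exp |t * S (x + ε)| ≤
        |t * S (x + ε)| ^ 3 / 6 * exp (r / 15 * |S (x + ε)|) := by gcongr
    have h8 := mul_le_mul_of_nonneg_right (h6.trans (add_le_add_right h7 _)) (hF x).le
    refine h8.trans (le_of_eq ?_)
    rw [abs_mul]
    ring
  have hB1 := hFi.add (hX1.const_mul t)
  have hB2 := hB1.add (hX2.const_mul (t ^ 2 / 2))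
  have hB3 := hB2.add (hX3.const_mul (|t| ^ 3 / 6))
  have hE : Integrable fun x => exp (t * S (x + ε)) * F x := by
    refine hB3.mono' (by fun_prop) (.of_forall fun x => ?_)
    rw [Real.norm_eq_abs, abs_of_nonneg (mul_nonneg (exp_pos _).le (hF x).le)]
    exact hpt x
  refine ⟨hE, ?_⟩
  have hint := integral_mono hE hB3 hpt
  rw [integral_add' hB2 (hX3.const_mul _), integral_add' hB1 (hX2.const_mul _),
    integral_add' hFi (hX1.const_mul _), integral_const_mul, integral_const_mul,
    integral_const_mul, hF1] at hint
  have h9 : t ^ 2 / 2 * ∫ x, S (x + ε) ^ 2 * F x ≤ t ^ 2 / 2 * v := by gcongr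
  have h10 : |t| ^ 3 / 6 * ∫ x, |S (x + ε)| ^ 3 * exp (r / 15 * |S (x + ε)|) * F x ≤
      |t| ^ 3 / 6 * (24 * v / r) := by gcongr
  have hv0 : 0 ≤ v :=
    le_trans (integral_nonneg fun x => mul_nonneg (sq_nonneg _) (hF x).le) hv2
  have h11 : |t| ^ 3 / 6 * (24 * v / r) ≤ v * t ^ 2 / 2 * (15 / r * |t|) := by
    have : v * t ^ 2 / 2 * (15 / r * |t|) - |t| ^ 3 / 6 * (24 * v / r) =
        7 / 2 * (v * |t| ^ 3 / r) := by
      rw [← sq_abs t]; ring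
    have h12 : 0 ≤ v * |t| ^ 3 / r := by positivity
    linarith
  refine le_trans ?_ (add_one_le_exp _)
  linarith

end TiltedSubgradient

/-- Sub-Gamma concentration of the empirical score: for i.i.d. samples `x₁,…,xₙ ~ f_r`
and `|ε| ≤ r/2`, with `v = max(E_{x~f_r}[s_r(x+ε)²], I_r)`, the empirical average
`(1/n)∑ s_r(xᵢ+ε)` is within `√(2v·log(1/δ)/n) + 15·log(1/δ)/(nr)` of its mean
`E_{x~f_r}[s_r(x+ε)]`, with probability at least `1 − 2δ`. -/
theorem empirical_score_concentration (f : ℝ → ℝ) (r : ℝ) (hf : IsDensity f) (hr : 0 < r)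
    (n : ℕ) (hn : 0 < n) (ε : ℝ) (hε : |ε| ≤ r / 2) (δ : ℝ) (hδ0 : 0 < δ) (hδ1 : δ < 1) :
    ENNReal.ofReal (1 - 2 * δ) ≤
      Measure.pi (fun _ : Fin n =>
          MeasureTheory.volume.withDensity (fun t => ENNReal.ofReal (smoothed f r t)))
        {x : Fin n → ℝ |
          |(1 / n : ℝ) * ∑ i, score f r (x i + ε) -
              ∫ t, score f r (t + ε) * smoothed f r t| ≤
            Real.sqrt (2 * max (∫ t, score f r (t + ε) ^ 2 * smoothed f r t)
                (fisherInfo f r) * Real.log (1 / δ) / n) +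
              15 * Real.log (1 / δ) / (n * r)} := by
  have hr15 : 0 < 15 / r := by positivity
  have := isProbabilityMeasure_smoothed hf hr
  have hF := smoothed_pos hf hr
  have hFm : Measurable (smoothed f r) := (smoothed_differentiable hf hr).continuous.measurable
  have hconv : ∀ g : ℝ → ℝ, (∫ x, g x ∂volume.withDensity
      fun t => ENNReal.ofReal (smoothed f r t)) = ∫ x, g x * smoothed f r x := fun g => by
    rw [integral_withDensity_eq_integral_toReal_smul hFm.ennreal_ofReal (by simp)]
    simp_rw [ENNReal.toReal_ofReal (hF _).le, smul_eq_mul, mul_comm]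
  have hmain := fun t (ht : |t| ≤ 1 / (15 / r)) =>
    (tiltedSubgradient_score hf hr).mgf_le hr hF (smoothed_integrable hf) hFm
      (score_measurable hf hr) (smoothed_integral hf hr) hε (t := t)
      (by rwa [one_div_div] at ht)
  have h := bernstein_two_sided (X := fun x => score f r (x + ε))
    (m := ∫ t, score f r (t + ε) * smoothed f r t)
    (v := max (∫ t, score f r (t + ε) ^ 2 * smoothed f r t) (fisherInfo f r))
    hn (le_max_of_le_left (integral_nonneg fun x => mul_nonneg (sq_nonneg _) (hF x).le))
    hr15 hδ0 hδ1
    (fun t ht => by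
      rw [integrable_withDensity_iff hFm.ennreal_ofReal (by simp)]
      simp_rw [ENNReal.toReal_ofReal (hF _).le]
      exact (hmain t ht).1)
    (fun t ht => by
      rw [hconv]
      exact (hmain t ht).2)
  have e : 15 / r * log (1 / δ) / n = 15 * log (1 / δ) / (n * r) := by field_simp
  rwa [e] at h

end
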